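/- Let 1/2 < H < 3/4 and θ > 0. For T > 0 define I(T) = ∫_{[0,T]⁴} e^{-θ|s₂-u₂| - θ|s₁-u₁|} |s₂-s₁|^{2H-2} |u₂-u₁|^{2H-2} du₁ du₂ ds₁ ds₂. Then I is differentiable on (0,∞) with derivative I′(T) = 4 ∫_{[0,T]³} e^{-θx₁ - θ|x₂-x₃|} x₃^{2H-2} |x₁-x₂|^{2H-2} dx₁ dx₂ dx₃. -/

import Mathlib

open MeasureTheory Real Set

/-- the four-dimensional integrand -/
noncomputable def FF (a θ : ℝ) (p : ℝ × ℝ × ℝ × ℝ) : ℝ :=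
  Real.exp (-θ * |p.2.1 - p.2.2.2| - θ * |p.1 - p.2.2.1|) *
            |p.2.1 - p.1| ^ a * |p.2.2.2 - p.2.2.1| ^ a

/-- the three-dimensional integrand -/
noncomputable def GG (a θ : ℝ) (p : ℝ × ℝ × ℝ) : ℝ :=
  Real.exp (-θ * p.1 - θ * |p.2.1 - p.2.2|) * p.2.2 ^ a * |p.1 - p.2.1| ^ a

def cube3 (t : ℝ) : Set (ℝ × ℝ × ℝ) := (Icc (0:ℝ) t) ×ˢ (Icc (0:ℝ) t) ×ˢ (Icc (0:ℝ) t)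

def cube4 (t : ℝ) : Set (ℝ × ℝ × ℝ × ℝ) :=
  (Icc (0:ℝ) t) ×ˢ (Icc (0:ℝ) t) ×ˢ (Icc (0:ℝ) t) ×ˢ (Icc (0:ℝ) t)

lemma cube3_meas (t : ℝ) : MeasurableSet (cube3 t) :=
  measurableSet_Icc.prod (measurableSet_Icc.prod measurableSet_Icc)

lemma cube4_meas (t : ℝ) : MeasurableSet (cube4 t) :=
  measurableSet_Icc.prod (measurableSet_Icc.prod (measurableSet_Icc.prod measurableSet_Icc))

lemma GG_meas (a θ : ℝ) : Measurable (GG a θ) := by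
  unfold GG
  fun_prop

lemma FF_meas (a θ : ℝ) : Measurable (FF a θ) := by
  unfold FF
  fun_prop

lemma psi_mp : MeasurePreserving (fun x : ℝ × ℝ × ℝ => (x.1, x.1 - x.2.1, x.2.2))
    volume volume := by
  have := MeasurePreserving.skew_product (μa := (volume : Measure ℝ)) (μb := (volume : Measure ℝ))
    (μc := (volume : Measure (ℝ × ℝ))) (μd := (volume : Measure (ℝ × ℝ))) (f := id)
    (MeasurePreserving.id _) (g := fun t y => (t - y.1, y.2)) (by
      unfold Function.uncurry; fun_prop) (by
      refine Filter.Eventually.of_forall fun t => ?_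
      exact ((Measure.measurePreserving_sub_left volume t).prod (MeasurePreserving.id volume)).map_eq)
  exact this

lemma h_int (a : ℝ) (ha : -1 < a) (R : ℝ) :
    Integrable (indicator (Icc 0 R) (fun x : ℝ => x ^ a)) := by
  rw [integrable_indicator_iff measurableSet_Icc]
  rcases le_or_gt 0 R with hR | hR
  · rw [integrableOn_Icc_iff_integrableOn_Ioc, ← intervalIntegrable_iff_integrableOn_Ioc_of_le hR]
    exact intervalIntegral.intervalIntegrable_rpow' ha
  · simp [Icc_eq_empty_of_lt hR]

lemma GG_int (a θ : ℝ) (ha : -1 < a) (hθ : 0 < θ) (R : ℝ) :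
    Integrable (indicator (cube3 R) (GG a θ)) := by
  set h : ℝ → ℝ := indicator (Icc 0 R) (fun x : ℝ => x ^ a) with hh
  have hi : Integrable h := h_int a ha R
  have h0 : ∀ x, 0 ≤ h x := fun x => indicator_nonneg (fun y hy => rpow_nonneg hy.1 _) x
  have hone : Integrable (indicator (Icc 0 R) (fun _ : ℝ => (1:ℝ))) := by
    rw [integrable_indicator_iff measurableSet_Icc]
    simp [integrableOn_const_iff]
  have h3 : Integrable (fun x : ℝ × ℝ × ℝ => indicator (Icc 0 R) (fun _ : ℝ => (1:ℝ)) x.1 *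
      ((h x.2.1 + h (- x.2.1)) * h x.2.2)) :=
    hone.mul_prod ((hi.add hi.comp_neg).mul_prod hi)
  have h4 := psi_mp.integrable_comp_of_integrable h3
  refine h4.mono' ((GG_meas a θ).indicator (cube3_meas R)).aestronglyMeasurable ?_
  refine Filter.Eventually.of_forall fun x => ?_
  by_cases hx : x ∈ cube3 R
  · obtain ⟨x1, x2, x3⟩ := x
    have hx' := hx
    simp only [cube3, mem_prod, mem_Icc] at hx'
    obtain ⟨⟨p1, q1⟩, ⟨p2, q2⟩, p3, q3⟩ := hx'
    rw [indicator_of_mem hx]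
    have e1 : indicator (Icc 0 R) (fun _ : ℝ => (1:ℝ)) x1 = 1 :=
      indicator_of_mem (show x1 ∈ Icc 0 R from ⟨p1, q1⟩) _
    have e3 : h x3 = x3 ^ a := indicator_of_mem (show x3 ∈ Icc 0 R from ⟨p3, q3⟩) _
    have e2 : |x1 - x2| ^ a ≤ h (x1 - x2) + h (-(x1 - x2)) := by
      rcases le_total 0 (x1 - x2) with hc | hc
      · have : h (x1 - x2) = (x1 - x2) ^ a :=
          indicator_of_mem (show x1 - x2 ∈ Icc 0 R from ⟨hc, by linarith⟩) _
        rw [abs_of_nonneg hc, this]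
        linarith [h0 (-(x1 - x2))]
      · have : h (-(x1 - x2)) = (-(x1 - x2)) ^ a :=
          indicator_of_mem (show -(x1 - x2) ∈ Icc 0 R from ⟨by linarith, by linarith⟩) _
        rw [abs_of_nonpos hc, this]
        linarith [h0 (x1 - x2)]
    simp only [Function.comp, e1, e3, one_mul, GG]
    have n1 : 0 ≤ x3 ^ a := rpow_nonneg p3 a
    have n2 : 0 ≤ |x1 - x2| ^ a := rpow_nonneg (abs_nonneg _) a
    rw [Real.norm_of_nonneg (by positivity)]
    have e : Real.exp (-θ * x1 - θ * |x2 - x3|) ≤ 1 := by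
      rw [Real.exp_le_one_iff]
      have := mul_nonneg hθ.le p1
      have := mul_nonneg hθ.le (abs_nonneg (x2 - x3))
      linarith
    calc _ ≤ 1 * x3 ^ a * |x1 - x2| ^ a := by gcongr
      _ = |x1 - x2| ^ a * x3 ^ a := by ring
      _ ≤ _ := by gcongr
  · rw [indicator_of_notMem hx, norm_zero]
    have := h0 (x.1 - x.2.1)
    have := h0 (-(x.1 - x.2.1))
    have := h0 (x.2.2)
    have : 0 ≤ indicator (Icc 0 R) (fun _ : ℝ => (1:ℝ)) x.1 :=
      indicator_nonneg (fun _ _ => zero_le_one) _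
    simp only [Function.comp]
    positivity

noncomputable def gg (a θ t : ℝ) : ℝ := ∫ x in cube3 t, GG a θ x

lemma gg_eq (a θ t : ℝ) : gg a θ t = ∫ x, indicator (cube3 t) (GG a θ) x :=
  (integral_indicator (cube3_meas t)).symm

lemma ev_aux (t0 y : ℝ) (hy : y ≠ t0) : ∀ᶠ t in nhds t0, (y ≤ t ↔ y ≤ t0) := by
  rcases lt_or_gt_of_ne hy with h | h
  · filter_upwards [lt_mem_nhds h] with t ht
    exact ⟨fun _ => h.le, fun _ => ht.le⟩
  · filter_upwards [gt_mem_nhds h] with t ht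
    constructor <;> intro <;> linarith

lemma gg_cont (a θ : ℝ) (ha : -1 < a) (hθ : 0 < θ) : Continuous (gg a θ) := by
  rw [continuous_iff_continuousAt]
  intro t0
  have : gg a θ = fun t => ∫ x, indicator (cube3 t) (GG a θ) x := funext (gg_eq a θ)
  rw [this]
  refine continuousAt_of_dominated (bound := fun x => ‖indicator (cube3 (t0+1)) (GG a θ) x‖)
    ?_ ?_ (GG_int a θ ha hθ (t0+1)).norm ?_
  · exact Filter.Eventually.of_forall fun t =>
      ((GG_meas a θ).indicator (cube3_meas t)).aestronglyMeasurable
  · filter_upwards [gt_mem_nhds (show t0 < t0 + 1 by linarith)] with t ht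
    refine Filter.Eventually.of_forall fun x => ?_
    refine norm_indicator_le_of_subset ?_ _ _
    have : Icc 0 t ⊆ Icc 0 (t0+1) := Icc_subset_Icc_right ht.le
    exact prod_mono this (prod_mono this this)
  · have hne : ∀ᵐ y : ℝ, y ≠ t0 := by simp [ae_iff]
    have n1 : ∀ᵐ x : ℝ × ℝ × ℝ, x.1 ≠ t0 := Measure.quasiMeasurePreserving_fst.ae hne
    have hne2 : ∀ᵐ x : ℝ × ℝ, x.1 ≠ t0 := Measure.quasiMeasurePreserving_fst.ae hne
    have hne3 : ∀ᵐ x : ℝ × ℝ, x.2 ≠ t0 := Measure.quasiMeasurePreserving_snd.ae hne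
    have n2 : ∀ᵐ x : ℝ × ℝ × ℝ, x.2.1 ≠ t0 := Measure.quasiMeasurePreserving_snd.ae hne2
    have n3 : ∀ᵐ x : ℝ × ℝ × ℝ, x.2.2 ≠ t0 := Measure.quasiMeasurePreserving_snd.ae hne3
    filter_upwards [n1, n2, n3] with x m1 m2 m3
    have : (fun t => indicator (cube3 t) (GG a θ) x) =ᶠ[nhds t0]
        fun _ => indicator (cube3 t0) (GG a θ) x := by
      filter_upwards [ev_aux _ _ m1, ev_aux _ _ m2, ev_aux _ _ m3] with t e1 e2 e3
      have : x ∈ cube3 t ↔ x ∈ cube3 t0 := by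
        simp only [cube3, mem_prod, mem_Icc, e1, e2, e3]
      by_cases hx : x ∈ cube3 t0
      · rw [indicator_of_mem hx, indicator_of_mem (this.2 hx)]
      · rw [indicator_of_notMem hx, indicator_of_notMem (fun h => hx (this.1 h))]
    exact continuousAt_const.congr this.symm

/-- change of variables -/
def phi : (ℝ × ℝ × ℝ × ℝ) ≃ᵐ (ℝ × ℝ × ℝ × ℝ) where
  toFun q := (q.1, q.1 - q.2.2.2, q.1 - q.2.1, q.1 - q.2.2.1)
  invFun p := (p.1, p.1 - p.2.2.1, p.1 - p.2.2.2, p.1 - p.2.1)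
  left_inv q := by simp
  right_inv q := by simp
  measurable_toFun := by simp only [Equiv.coe_fn_mk]; fun_prop
  measurable_invFun := by simp only [Equiv.coe_fn_symm_mk]; fun_prop

lemma rot_mp : MeasurePreserving (fun x : ℝ × ℝ × ℝ => (x.2.2, x.1, x.2.1)) volume volume := by
  have h1 : MeasurePreserving (MeasurableEquiv.prodAssoc : (ℝ × ℝ) × ℝ ≃ᵐ ℝ × ℝ × ℝ).symm
    volume volume := (measurePreserving_prodAssoc volume volume volume).symm
  have h2 : MeasurePreserving (Prod.swap : (ℝ × ℝ) × ℝ → ℝ × ℝ × ℝ) volume volume :=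
    Measure.measurePreserving_swap
  exact h2.comp h1

lemma phi_mp : MeasurePreserving phi volume volume := by
  have := MeasurePreserving.skew_product (μa := (volume : Measure ℝ)) (μb := (volume : Measure ℝ))
    (μc := (volume : Measure (ℝ × ℝ × ℝ))) (μd := (volume : Measure (ℝ × ℝ × ℝ))) (f := id)
    (MeasurePreserving.id _) (g := fun t y => (t - y.2.2, t - y.1, t - y.2.1)) (by
      unfold Function.uncurry; fun_prop) (by
      refine Filter.Eventually.of_forall fun t => ?_
      have h := Measure.measurePreserving_sub_left (volume : Measure ℝ) t
      exact ((h.prod (h.prod h)).comp rot_mp).map_eq)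
  exact this

def sig : (ℝ × ℝ × ℝ × ℝ) ≃ᵐ (ℝ × ℝ × ℝ × ℝ) where
  toFun p := (p.2.1, p.1, p.2.2.2, p.2.2.1)
  invFun p := (p.2.1, p.1, p.2.2.2, p.2.2.1)
  left_inv q := by simp
  right_inv q := by simp
  measurable_toFun := by simp only [Equiv.coe_fn_mk]; fun_prop
  measurable_invFun := by simp only [Equiv.coe_fn_symm_mk]; fun_prop

def tau : (ℝ × ℝ × ℝ × ℝ) ≃ᵐ (ℝ × ℝ × ℝ × ℝ) where
  toFun p := (p.2.2.1, p.2.2.2, p.1, p.2.1)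
  invFun p := (p.2.2.1, p.2.2.2, p.1, p.2.1)
  left_inv q := by simp
  right_inv q := by simp
  measurable_toFun := by simp only [Equiv.coe_fn_mk]; fun_prop
  measurable_invFun := by simp only [Equiv.coe_fn_symm_mk]; fun_prop

lemma assoc4 : MeasurePreserving
    (MeasurableEquiv.prodAssoc : (ℝ × ℝ) × (ℝ × ℝ) ≃ᵐ ℝ × ℝ × ℝ × ℝ) volume volume :=
  measurePreserving_prodAssoc volume volume volume

lemma sig_mp : MeasurePreserving sig volume volume := by
  have h2 : MeasurePreserving (Prod.swap : ℝ × ℝ → ℝ × ℝ) volume volume :=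
    Measure.measurePreserving_swap
  exact assoc4.comp ((h2.prod h2).comp assoc4.symm)

lemma tau_mp : MeasurePreserving tau volume volume := by
  have h2 : MeasurePreserving (Prod.swap : (ℝ × ℝ) × (ℝ × ℝ) → (ℝ × ℝ) × (ℝ × ℝ)) volume volume :=
    Measure.measurePreserving_swap
  exact assoc4.comp (h2.comp assoc4.symm)

/-- part of the cube where the first variable is the largest -/
def A1 (T : ℝ) : Set (ℝ × ℝ × ℝ × ℝ) :=
  cube4 T ∩ {p | p.2.1 ≤ p.1 ∧ p.2.2.1 ≤ p.1 ∧ p.2.2.2 ≤ p.1}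

noncomputable def ff (a θ T : ℝ) : ℝ × ℝ × ℝ × ℝ → ℝ := indicator (A1 T) (FF a θ)

lemma ff_phi (a θ T : ℝ) (q : ℝ × ℝ × ℝ × ℝ) :
    ff a θ T (phi q) =
      indicator (Icc 0 T) (fun t => indicator (cube3 t) (GG a θ) q.2) q.1 := by
  obtain ⟨t, x1, x2, x3⟩ := q
  have hφ : phi (t, x1, x2, x3) = (t, t - x3, t - x1, t - x2) := rfl
  have key : phi (t, x1, x2, x3) ∈ A1 T ↔ t ∈ Icc 0 T ∧ (x1, x2, x3) ∈ cube3 t := by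
    rw [hφ]
    simp only [A1, cube4, cube3, mem_inter_iff, mem_prod, mem_Icc, mem_ofPred_eq]
    constructor
    · rintro ⟨⟨⟨_, _⟩, ⟨_, _⟩, ⟨_, _⟩, _, _⟩, _, _, _⟩
      refine ⟨⟨?_, ?_⟩, ⟨?_, ?_⟩, ⟨?_, ?_⟩, ?_, ?_⟩ <;> linarith
    · rintro ⟨⟨_, _⟩, ⟨_, _⟩, ⟨_, _⟩, _, _⟩
      refine ⟨⟨⟨?_, ?_⟩, ⟨?_, ?_⟩, ⟨?_, ?_⟩, ?_, ?_⟩, ?_, ?_, ?_⟩ <;> linarith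
  unfold ff
  by_cases h : phi (t, x1, x2, x3) ∈ A1 T
  · have h' := key.1 h
    rw [indicator_of_mem h, indicator_of_mem h'.1, indicator_of_mem h'.2, hφ]
    have h3 : 0 ≤ x3 := h'.2.2.2.1
    have h1 : 0 ≤ x1 := h'.2.1.1
    simp only [FF, GG]
    have e1 : |t - x3 - (t - x2)| = |x2 - x3| := by congr 1; ring
    have e2 : |t - (t - x1)| = x1 := by rw [sub_sub_cancel, abs_of_nonneg h1]
    have e3 : |t - x3 - t| = x3 := by
      rw [show t - x3 - t = -x3 by ring, abs_neg, abs_of_nonneg h3]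
    have e4 : |t - x2 - (t - x1)| = |x1 - x2| := by congr 1; ring
    rw [e1, e2, e3, e4]
    congr 3
    ring
  · rw [indicator_of_notMem h]
    by_cases ht : t ∈ Icc 0 T
    · rw [indicator_of_mem ht, indicator_of_notMem (fun hx => h (key.2 ⟨ht, hx⟩))]
    · rw [indicator_of_notMem ht]

lemma A1_meas (T : ℝ) : MeasurableSet (A1 T) := by
  refine (cube4_meas T).inter ?_
  have k1 : MeasurableSet {p : ℝ × ℝ × ℝ × ℝ | p.2.1 ≤ p.1} :=
    measurableSet_le (by fun_prop) (by fun_prop)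
  have k2 : MeasurableSet {p : ℝ × ℝ × ℝ × ℝ | p.2.2.1 ≤ p.1} :=
    measurableSet_le (by fun_prop) (by fun_prop)
  have k3 : MeasurableSet {p : ℝ × ℝ × ℝ × ℝ | p.2.2.2 ≤ p.1} :=
    measurableSet_le (by fun_prop) (by fun_prop)
  exact k1.inter (k2.inter k3)

lemma ff_meas (a θ T : ℝ) : Measurable (ff a θ T) := (FF_meas a θ).indicator (A1_meas T)

lemma ff_phi_int (a θ : ℝ) (ha : -1 < a) (hθ : 0 < θ) (T : ℝ) :
    Integrable (fun q => ff a θ T (phi q)) := by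
  have hone : Integrable (indicator (Icc 0 T) (fun _ : ℝ => (1:ℝ))) := by
    rw [integrable_indicator_iff measurableSet_Icc]
    simp [integrableOn_const_iff]
  refine (hone.mul_prod (GG_int a θ ha hθ T)).mono
    ((ff_meas a θ T).comp phi.measurable).aestronglyMeasurable ?_
  refine Filter.Eventually.of_forall fun q => ?_
  rw [ff_phi]
  by_cases ht : q.1 ∈ Icc 0 T
  · rw [indicator_of_mem ht, indicator_of_mem ht, one_mul]
    refine norm_indicator_le_of_subset ?_ _ _
    have : Icc 0 q.1 ⊆ Icc 0 T := Icc_subset_Icc_right ht.2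
    exact prod_mono this (prod_mono this this)
  · rw [indicator_of_notMem ht, norm_zero]
    exact norm_nonneg _

lemma ff_int (a θ : ℝ) (ha : -1 < a) (hθ : 0 < θ) (T : ℝ) : Integrable (ff a θ T) :=
  (phi_mp.integrable_comp_emb phi.measurableEmbedding).1 (ff_phi_int a θ ha hθ T)

lemma ff_integral (a θ : ℝ) (ha : -1 < a) (hθ : 0 < θ) (T : ℝ) :
    ∫ p, ff a θ T p = ∫ t in Icc 0 T, gg a θ t := by
  rw [← phi_mp.integral_comp' (ff a θ T)]
  have := integral_prod _ (ff_phi_int a θ ha hθ T)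
  refine this.trans ?_
  rw [← integral_indicator measurableSet_Icc]
  congr 1
  funext t
  simp only [ff_phi]
  by_cases ht : t ∈ Icc 0 T
  · simp only [indicator_of_mem ht, gg_eq]
  · simp only [indicator_of_notMem ht, integral_zero]

lemma null_aux (L : (ℝ × ℝ × ℝ × ℝ) →ₗ[ℝ] ℝ) (v : ℝ × ℝ × ℝ × ℝ) (hv : L v ≠ 0) :
    ∀ᵐ p, L p ≠ 0 := by
  have i2 : (volume : Measure (ℝ × ℝ)).IsAddHaarMeasure :=
    Measure.prod.instIsAddHaarMeasure volume volume
  have i3 : (volume : Measure (ℝ × ℝ × ℝ)).IsAddHaarMeasure :=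
    Measure.prod.instIsAddHaarMeasure volume volume
  have i4 : (volume : Measure (ℝ × ℝ × ℝ × ℝ)).IsAddHaarMeasure :=
    Measure.prod.instIsAddHaarMeasure volume volume
  have : volume ((LinearMap.ker L : Submodule ℝ _) : Set (ℝ × ℝ × ℝ × ℝ)) = 0 := by
    refine Measure.addHaar_submodule _ _ fun h => hv ?_
    have : v ∈ (⊤ : Submodule ℝ (ℝ × ℝ × ℝ × ℝ)) := trivial
    rw [← h] at this
    exact this
  rw [ae_iff]
  refine measure_mono_null (fun p hp => ?_) this
  exact not_not.1 hp

lemma ties : ∀ᵐ p : ℝ × ℝ × ℝ × ℝ, p.1 ≠ p.2.1 ∧ p.1 ≠ p.2.2.1 ∧ p.1 ≠ p.2.2.2 ∧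
    p.2.1 ≠ p.2.2.1 ∧ p.2.1 ≠ p.2.2.2 ∧ p.2.2.1 ≠ p.2.2.2 := by
  let l1 : (ℝ × ℝ × ℝ × ℝ) →ₗ[ℝ] ℝ := LinearMap.fst ℝ _ _
  let l2 : (ℝ × ℝ × ℝ × ℝ) →ₗ[ℝ] ℝ := LinearMap.fst ℝ _ _ ∘ₗ LinearMap.snd ℝ _ _
  let l3 : (ℝ × ℝ × ℝ × ℝ) →ₗ[ℝ] ℝ :=
    LinearMap.fst ℝ _ _ ∘ₗ LinearMap.snd ℝ _ _ ∘ₗ LinearMap.snd ℝ _ _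
  let l4 : (ℝ × ℝ × ℝ × ℝ) →ₗ[ℝ] ℝ :=
    LinearMap.snd ℝ _ _ ∘ₗ LinearMap.snd ℝ _ _ ∘ₗ LinearMap.snd ℝ _ _
  filter_upwards [null_aux (l1 - l2) (1,2,3,4) (by simp [l1, l2]; norm_num),
    null_aux (l1 - l3) (1,2,3,4) (by simp [l1, l3]; norm_num),
    null_aux (l1 - l4) (1,2,3,4) (by simp [l1, l4]; norm_num),
    null_aux (l2 - l3) (1,2,3,4) (by simp [l2, l3]; norm_num),
    null_aux (l2 - l4) (1,2,3,4) (by simp [l2, l4]; norm_num),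
    null_aux (l3 - l4) (1,2,3,4) (by simp [l3, l4]; norm_num)] with p a1 a2 a3 a4 a5 a6
  exact ⟨sub_ne_zero.1 a1, sub_ne_zero.1 a2, sub_ne_zero.1 a3, sub_ne_zero.1 a4,
    sub_ne_zero.1 a5, sub_ne_zero.1 a6⟩

lemma FF_sig (a θ : ℝ) (p) : FF a θ (sig p) = FF a θ p := by
  obtain ⟨s1, s2, u1, u2⟩ := p
  have : sig (s1, s2, u1, u2) = (s2, s1, u2, u1) := rfl
  rw [this]
  simp only [FF]
  rw [abs_sub_comm s1 s2, abs_sub_comm u1 u2]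
  congr 3
  ring

lemma FF_tau (a θ : ℝ) (p) : FF a θ (tau p) = FF a θ p := by
  obtain ⟨s1, s2, u1, u2⟩ := p
  have : tau (s1, s2, u1, u2) = (u1, u2, s1, s2) := rfl
  rw [this]
  simp only [FF]
  rw [abs_sub_comm u2 s2, abs_sub_comm u1 s1]
  ring

lemma decomp (a θ T : ℝ) : indicator (cube4 T) (FF a θ) =ᵐ[volume]
    fun p => (ff a θ T p + ff a θ T (sig p)) +
      (ff a θ T (tau p) + ff a θ T (sig (tau p))) := by
  classical
  filter_upwards [ties] with p hp
  simp only [ff, indicator_apply, FF_sig, FF_tau]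
  obtain ⟨s1, s2, u1, u2⟩ := p
  obtain ⟨a1, a2, a3, a4, a5, a6⟩ := hp
  simp only at a1 a2 a3 a4 a5 a6
  have e1 : sig (s1, s2, u1, u2) = (s2, s1, u2, u1) := rfl
  have e2 : tau (s1, s2, u1, u2) = (u1, u2, s1, s2) := rfl
  have e3 : sig (u1, u2, s1, s2) = (u2, u1, s2, s1) := rfl
  rw [e2, e1, e3]
  by_cases hc : (s1, s2, u1, u2) ∈ cube4 T
  · have hc' := hc
    simp only [cube4, mem_prod] at hc'
    obtain ⟨c1, c2, c3, c4⟩ := hc'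
    have m1 : (s2, s1, u2, u1) ∈ cube4 T := ⟨c2, c1, c4, c3⟩
    have m2 : (u1, u2, s1, s2) ∈ cube4 T := ⟨c3, c4, c1, c2⟩
    have m3 : (u2, u1, s2, s1) ∈ cube4 T := ⟨c4, c3, c2, c1⟩
    simp only [A1, mem_inter_iff, hc, m1, m2, m3, true_and, mem_ofPred_eq, if_true]
    generalize FF a θ (s1, s2, u1, u2) = z
    clear c1 c2 c3 c4 m1 m2 m3 e1 e2 e3 hc
    rcases lt_or_gt_of_ne a1 with b1 | b1 <;> rcases lt_or_gt_of_ne a2 with b2 | b2 <;>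
    rcases lt_or_gt_of_ne a3 with b3 | b3 <;> rcases lt_or_gt_of_ne a4 with b4 | b4 <;>
    rcases lt_or_gt_of_ne a5 with b5 | b5 <;> rcases lt_or_gt_of_ne a6 with b6 | b6 <;>
    first
      | (exfalso; linarith)
      | simp [b1.le, b2.le, b3.le, b4.le, b5.le, b6.le, b1.not_ge, b2.not_ge, b3.not_ge,
          b4.not_ge, b5.not_ge, b6.not_ge]
  · have m0 : (s1, s2, u1, u2) ∉ A1 T := fun h => hc h.1
    have m1 : (s2, s1, u2, u1) ∉ A1 T := fun h => hc ⟨h.1.2.1, h.1.1, h.1.2.2.2, h.1.2.2.1⟩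
    have m2 : (u1, u2, s1, s2) ∉ A1 T := fun h => hc ⟨h.1.2.2.1, h.1.2.2.2, h.1.1, h.1.2.1⟩
    have m3 : (u2, u1, s2, s1) ∉ A1 T := fun h => hc ⟨h.1.2.2.2, h.1.2.2.1, h.1.2.1, h.1.1⟩
    simp [hc, m0, m1, m2, m3]

lemma FF_integral (a θ : ℝ) (ha : -1 < a) (hθ : 0 < θ) (T : ℝ) :
    ∫ p in cube4 T, FF a θ p = 4 * ∫ t in Icc 0 T, gg a θ t := by
  have i0 := ff_int a θ ha hθ T
  have i1 : Integrable (fun p => ff a θ T (sig p)) :=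
    (sig_mp.integrable_comp_emb sig.measurableEmbedding).2 i0
  have i2 : Integrable (fun p => ff a θ T (tau p)) :=
    (tau_mp.integrable_comp_emb tau.measurableEmbedding).2 i0
  have i3 : Integrable (fun p => ff a θ T (sig (tau p))) :=
    (tau_mp.integrable_comp_emb tau.measurableEmbedding).2 i1
  have j1 : ∫ p, ff a θ T (sig p) = ∫ p, ff a θ T p := sig_mp.integral_comp' (ff a θ T)
  have j2 : ∫ p, ff a θ T (tau p) = ∫ p, ff a θ T p := tau_mp.integral_comp' (ff a θ T)
  have j3 : ∫ p, ff a θ T (sig (tau p)) = ∫ p, ff a θ T (sig p) :=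
    tau_mp.integral_comp' (fun p => ff a θ T (sig p))
  have k : ∫ p, ((ff a θ T p + ff a θ T (sig p)) +
      (ff a θ T (tau p) + ff a θ T (sig (tau p)))) =
      (∫ p, (ff a θ T p + ff a θ T (sig p))) +
      ∫ p, (ff a θ T (tau p) + ff a θ T (sig (tau p))) :=
    integral_add (i0.add i1) (i2.add i3)
  rw [← integral_indicator (cube4_meas T), integral_congr_ae (decomp a θ T), k,
    integral_add i0 i1, integral_add i2 i3, j3, j2, j1, ff_integral a θ ha hθ T]
  ring

theorem stmt_14 (H θ : ℝ) (h1 : 1/2 < H) (h2 : H < 3/4) (hθ : 0 < θ) :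
    ∀ T : ℝ, 0 < T →
      HasDerivAt (fun T : ℝ =>
        ∫ p in (Icc (0:ℝ) T) ×ˢ (Icc (0:ℝ) T) ×ˢ (Icc (0:ℝ) T) ×ˢ (Icc (0:ℝ) T),
          Real.exp (-θ * |p.2.1 - p.2.2.2| - θ * |p.1 - p.2.2.1|) *
            |p.2.1 - p.1| ^ (2*H - 2) * |p.2.2.2 - p.2.2.1| ^ (2*H - 2))
        (4 * ∫ p in (Icc (0:ℝ) T) ×ˢ (Icc (0:ℝ) T) ×ˢ (Icc (0:ℝ) T),
          Real.exp (-θ * p.1 - θ * |p.2.1 - p.2.2|) *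
            p.2.2 ^ (2*H - 2) * |p.1 - p.2.1| ^ (2*H - 2))
        T := by
  intro T hT
  have ha : -1 < 2 * H - 2 := by linarith
  change HasDerivAt (fun T : ℝ => ∫ p in cube4 T, FF (2*H-2) θ p) (4 * gg (2*H-2) θ T) T
  have hc := gg_cont (2*H-2) θ ha hθ
  have hd : HasDerivAt (fun T => ∫ t in (0:ℝ)..T, gg (2*H-2) θ t) (gg (2*H-2) θ T) T :=
    hc.integral_hasStrictDerivAt 0 T |>.hasDerivAt
  refine (hd.const_mul 4).congr_of_eventuallyEq ?_
  filter_upwards [lt_mem_nhds hT] with t ht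
  rw [FF_integral _ _ ha hθ, intervalIntegral.integral_of_le ht.le, integral_Icc_eq_integral_Ioc]
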